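/- arXiv:2506.21836 — 3 statements merged into one kernel-verified Lean document; each statement's English description precedes it below -/
import Mathlib

section
/- Characterization of the lexicographic excellence solution: Let X be a finite set with |X| ≥ 2. An SRS R : ℛ(𝔛) → ℛ(X) satisfies WIVIP, IWS, and SSI if and only if R = R^L. -/
/-!
Social ranking solutions (SRSs).  The set of individuals is a finite type `X`;
coalitions are elements of `Finset X` (so the domain of a power relation is the
whole power set `𝔛 = 2^X`).  A weak order `≿ ∈ ℛ(𝔛)` is encoded as a relation
`r : Finset X → Finset X → Prop` together with (when needed) its list of
equivalence classes `L = [Σ₁, …, Σ_l]` in strictly decreasing order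
(`IsClassList r L`).
-/

namespace SocialRanking

variable {X : Type*} [Fintype X] [DecidableEq X]

/-- A weak order: a reflexive, complete and transitive binary relation. -/
def IsWeakOrder {A : Type*} (r : A → A → Prop) : Prop :=
  Reflexive r ∧ (∀ a b, r a b ∨ r b a) ∧ Transitive r

/-- A social ranking solution maps every weak order on `2^X` to a weak order on `X`. -/
def IsSRS (R : (Finset X → Finset X → Prop) → X → X → Prop) : Prop :=
  ∀ r, IsWeakOrder r → IsWeakOrder (R r)

/-- `IsClassList r L` : `L = [Σ₁, …, Σ_l]` is the list of the equivalence classes of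
the weak order `r` on `2^X`, in strictly decreasing order (`≿ : Σ₁ ≻ ⋯ ≻ Σ_l`):
every class is nonempty, every coalition lies in exactly one class, and
`S ≿ T ↔ i ≤ j` whenever `S ∈ Σᵢ` and `T ∈ Σⱼ` (0-based indices). -/
def IsClassList (r : Finset X → Finset X → Prop) (L : List (Finset (Finset X))) : Prop :=
  (∀ C ∈ L, C.Nonempty) ∧
  (∀ S : Finset X, ∃! i : ℕ, i < L.length ∧ S ∈ L.getD i ∅) ∧
  (∀ i j : ℕ, i < L.length → j < L.length →
    ∀ S ∈ L.getD i ∅, ∀ T ∈ L.getD j ∅, (r S T ↔ i ≤ j))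

/-- The asymmetric (strict) part `P` of a relation. -/
def StrictPart {A : Type*} (p : A → A → Prop) (a b : A) : Prop := p a b ∧ ¬ p b a

/-- The symmetric part `I` (indifference) of a relation. -/
def IndiffPart {A : Type*} (p : A → A → Prop) (a b : A) : Prop := p a b ∧ p b a

/-- The restrictions of `p` and `q` to `{x, y}` coincide. -/
def AgreeOn (p q : X → X → Prop) (x y : X) : Prop :=
  ∀ a ∈ ({x, y} : Set X), ∀ b ∈ ({x, y} : Set X), (p a b ↔ q a b)

/-- `|Δ[x]|` : the number of coalitions in `Δ` containing `x`. -/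
def count (Δ : Finset (Finset X)) (x : X) : ℕ := (Δ.filter (fun S => x ∈ S)).card

/-! ### Independence axioms and further axioms -/

/-- WIVIP: for a dichotomous `≿ : Σ₁ ≻ Σ₂`, any `x ∈ ⋂Σ₁` is socially strictly above
any `y ∉ ⋂Σ₁`. -/
def WIVIP (R : (Finset X → Finset X → Prop) → X → X → Prop) : Prop :=
  ∀ (r : Finset X → Finset X → Prop) (C₁ C₂ : Finset (Finset X)),
    IsClassList r [C₁, C₂] →
    ∀ x y : X, (∀ S ∈ C₁, x ∈ S) → (∃ S ∈ C₁, y ∉ S) →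
    StrictPart (R r) x y

/-- IWS (independence from the worst set): if `≿ : Σ₁ ≻ ⋯ ≻ Σ_{l-1} ≻ Σ_l` (`l ≥ 2`)
and `≿'` is obtained from `≿` by partitioning the worst class `Σ_l` into ordered
classes `Γ₁ ≻' ⋯ ≻' Γ_{l'}`, then `x P_≿ y` implies `x P_≿' y`. -/
def IWS (R : (Finset X → Finset X → Prop) → X → X → Prop) : Prop :=
  ∀ (r r' : Finset X → Finset X → Prop) (L Γ : List (Finset (Finset X)))
    (W : Finset (Finset X)),
    L ≠ [] → IsClassList r (L ++ [W]) → IsClassList r' (L ++ Γ) →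
    ∀ x y : X, StrictPart (R r) x y → StrictPart (R r') x y

/-- IBS (independence from the best set): if `≿ : Σ₁ ≻ Σ₂ ≻ ⋯ ≻ Σ_l` (`l ≥ 2`)
and `≿'` is obtained from `≿` by partitioning the best class `Σ₁` into ordered
classes `Γ₁ ≻' ⋯ ≻' Γ_{l'}`, then `x P_≿ y` implies `x P_≿' y`. -/
def IBS (R : (Finset X → Finset X → Prop) → X → X → Prop) : Prop :=
  ∀ (r r' : Finset X → Finset X → Prop) (B : Finset (Finset X))
    (L Γ : List (Finset (Finset X))),
    L ≠ [] → IsClassList r (B :: L) → IsClassList r' (Γ ++ L) →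
    ∀ x y : X, StrictPart (R r) x y → StrictPart (R r') x y

/-- TO (tops-only): two weak orders with the same best equivalence class get the
same social ranking. -/
def TO (R : (Finset X → Finset X → Prop) → X → X → Prop) : Prop :=
  ∀ (r r' : Finset X → Finset X → Prop) (B : Finset (Finset X))
    (L L' : List (Finset (Finset X))),
    IsClassList r (B :: L) → IsClassList r' (B :: L') → R r = R r'

/-- The class list obtained from `L` by sliding `Δ` out of class `k₁` into class `k₂`
(`Σ_{k₁}` is replaced by `Σ_{k₁} \ Δ` and `Σ_{k₂}` by `Σ_{k₂} ∪ Δ`; if `Δ = Σ_{k₁}`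
the emptied class disappears). -/
def slide (L : List (Finset (Finset X))) (k₁ k₂ : ℕ) (Δ : Finset (Finset X)) :
    List (Finset (Finset X)) :=
  ((L.set k₁ ((L.getD k₁ ∅) \ Δ)).set k₂ ((L.getD k₂ ∅) ∪ Δ)).filter
    (fun C => decide (C ≠ ∅))

/-- SI (slide independence): sliding a proper subfamily `Δ ⊊ Σ_{k₁}` with
`|Δ[x]| = |Δ[y]|` into another class does not change the social ranking on `{x, y}`. -/
def SI (R : (Finset X → Finset X → Prop) → X → X → Prop) : Prop :=
  ∀ (r r' : Finset X → Finset X → Prop) (L : List (Finset (Finset X)))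
    (k₁ k₂ : ℕ) (x y : X) (Δ : Finset (Finset X)),
    IsClassList r L → k₁ < L.length → k₂ < L.length →
    Δ ⊂ L.getD k₁ ∅ → count Δ x = count Δ y →
    IsClassList r' (slide L k₁ k₂ Δ) →
    AgreeOn (R r) (R r') x y

/-- SSI (strong slide independence): as SI, but `Δ ⊆ Σ_{k₁}` may be the whole class
(in which case the class disappears). -/
def SSI (R : (Finset X → Finset X → Prop) → X → X → Prop) : Prop :=
  ∀ (r r' : Finset X → Finset X → Prop) (L : List (Finset (Finset X)))
    (k₁ k₂ : ℕ) (x y : X) (Δ : Finset (Finset X)),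
    IsClassList r L → k₁ < L.length → k₂ < L.length →
    Δ ⊆ L.getD k₁ ∅ → count Δ x = count Δ y →
    IsClassList r' (slide L k₁ k₂ Δ) →
    AgreeOn (R r) (R r') x y

/-- Top-SI: the condition of SI restricted to slides out of the best class (`k₁ = 1`,
i.e. index `0`). -/
def TopSI (R : (Finset X → Finset X → Prop) → X → X → Prop) : Prop :=
  ∀ (r r' : Finset X → Finset X → Prop) (L : List (Finset (Finset X)))
    (k₂ : ℕ) (x y : X) (Δ : Finset (Finset X)),
    IsClassList r L → 0 < L.length → k₂ < L.length →
    Δ ⊂ L.getD 0 ∅ → count Δ x = count Δ y →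
    IsClassList r' (slide L 0 k₂ Δ) →
    AgreeOn (R r) (R r') x y

/-- The class list of `≿' : Σ₁ ≻' ⋯ ≻' Σ_{k-1} ≻' Δ ≻' Σ_k \ Δ ≻' ⋯ ≻' Σ_l`
(empty classes disappear). -/
def inuiList (L : List (Finset (Finset X))) (k : ℕ) (Δ : Finset (Finset X)) :
    List (Finset (Finset X)) :=
  (L.take k ++ [Δ, (L.getD k ∅) \ Δ] ++ L.drop (k + 1)).filter
    (fun C => decide (C ≠ ∅))

/-- INUI (independence of non-unanimous improvements). -/
def INUI (R : (Finset X → Finset X → Prop) → X → X → Prop) : Prop :=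
  ∀ (r r' : Finset X → Finset X → Prop) (L : List (Finset (Finset X)))
    (k : ℕ) (Δ : Finset (Finset X)) (x y : X),
    IsClassList r L → k < L.length → Δ ⊆ L.getD k ∅ →
    (∃ S ∈ Δ, x ∉ S) → (∃ S ∈ Δ, y ∉ S) →
    IsClassList r' (inuiList L k Δ) →
    AgreeOn (R r) (R r') x y

/-- The weak order `≿_π := {(π(S), π(T)) : S ≿ T}` induced by a permutation `π` of `X`. -/
def permRel (π : Equiv.Perm X) (r : Finset X → Finset X → Prop) :
    Finset X → Finset X → Prop :=
  fun A B => r (A.image π.symm) (B.image π.symm)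

/-- NT (neutrality). -/
def NT (R : (Finset X → Finset X → Prop) → X → X → Prop) : Prop :=
  ∀ (π : Equiv.Perm X) (r : Finset X → Finset X → Prop), IsWeakOrder r →
    ∀ x y : X, (R (permRel π r) (π x) (π y) ↔ R r x y)

/-- IIC (independence of irrelevant coalitions). -/
def IIC (R : (Finset X → Finset X → Prop) → X → X → Prop) : Prop :=
  ∀ (r r' : Finset X → Finset X → Prop), IsWeakOrder r → IsWeakOrder r' →
    ∀ x y : X,
      (∀ S : Finset X, x ∉ S → y ∉ S →
        (r (insert x S) (insert y S) ↔ r' (insert x S) (insert y S))) →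
      (R r x y ↔ R r' x y)

/-! ### The social ranking solutions -/

/-- `θ_≿(x) = (|Σ₁[x]|, …, |Σ_l[x]|)`. -/
def theta (L : List (Finset (Finset X))) (x : X) : List ℕ := L.map (fun C => count C x)

/-- The lexicographic order `a ≥^L b` on vectors of naturals. -/
def GeLex (a b : List ℕ) : Prop :=
  a = b ∨ ∃ k < a.length, (∀ j < k, a.getD j 0 = b.getD j 0) ∧ b.getD k 0 < a.getD k 0

/-- The dual lexicographic order `a ≥^DL b` (read from the last coordinate;
fewer appearances in worse classes is better). -/
def GeDualLex (a b : List ℕ) : Prop :=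
  a = b ∨ ∃ k < a.length, (∀ j, k < j → a.getD j 0 = b.getD j 0) ∧ a.getD k 0 < b.getD k 0

/-- The lexicographic excellence solution `R^L` : `x R^L_≿ y ↔ θ_≿(x) ≥^L θ_≿(y)`. -/
def RL (r : Finset X → Finset X → Prop) (x y : X) : Prop :=
  ∀ L, IsClassList r L → GeLex (theta L x) (theta L y)

/-- The dual lexicographic excellence solution `R^DL`. -/
def RDL (r : Finset X → Finset X → Prop) (x y : X) : Prop :=
  ∀ L, IsClassList r L → GeDualLex (theta L x) (theta L y)

/-- Plurality `R^P` : `x R^P_≿ y ↔ |Σ₁[x]| ≥ |Σ₁[y]|`. -/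
def RP (r : Finset X → Finset X → Prop) (x y : X) : Prop :=
  ∀ L, IsClassList r L → count (L.getD 0 ∅) y ≤ count (L.getD 0 ∅) x

/-- `e_≿(x)` : the largest `k` such that `x` belongs to every coalition of each of the
first `k` equivalence classes (`0` if `x ∉ T₁`). -/
def eIIS (L : List (Finset (Finset X))) (x : X) : ℕ :=
  (L.takeWhile (fun C => decide (∀ S ∈ C, x ∈ S))).length

/-- The intersection initial segment rule `R^IIS` : `x R^IIS_≿ y ↔ e_≿(x) ≥ e_≿(y)`. -/
def RIIS (r : Finset X → Finset X → Prop) (x y : X) : Prop :=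
  ∀ L, IsClassList r L → eIIS L y ≤ eIIS L x

/-- The constant-`X` rule: everybody is ranked indifferent. -/
def RconstX : (Finset X → Finset X → Prop) → X → X → Prop := fun _ _ _ => True

/-- The split-plurality score `s^split_≿(z) = ∑_{S ∈ Σ₁ : z ∈ S} 1/|S|`. -/
def splitScore (C : Finset (Finset X)) (z : X) : ℚ :=
  ∑ S ∈ C.filter (fun S => z ∈ S), (1 : ℚ) / (S.card : ℚ)

/-- Split-plurality `R^splitP`. -/
def RsplitP (r : Finset X → Finset X → Prop) (x y : X) : Prop :=
  ∀ L, IsClassList r L → splitScore (L.getD 0 ∅) y ≤ splitScore (L.getD 0 ∅) x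

/-- Plurality with tie-breaking by a linear order `t = ▷` :
`x R^{P,▷}_≿ y ↔ (x P^P_≿ y ∨ (x I^P_≿ y ∧ x ▷ y))`. -/
def RPtie (t : X → X → Prop) (r : Finset X → Finset X → Prop) (x y : X) : Prop :=
  ∀ L, IsClassList r L →
    (count (L.getD 0 ∅) y < count (L.getD 0 ∅) x ∨
      (count (L.getD 0 ∅) x = count (L.getD 0 ∅) y ∧ t x y))

/-!
Whether `x` or `y` is ahead in `R^L` is decided by the sign of the first nonzero margin
`|Σₖ[x]| - |Σₖ[y]|`. Slides with `|Δ[x]| = |Δ[y]|` preserve all margins, which gives SSI, and the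
margins add up to zero, so the last one is never the first nonzero one, which gives IWS.

Conversely, SSI allows a top class of margin zero to be merged into the next class, until either
the top class `C` has nonzero margin or a single class remains. In the first case, say with positive
margin, IWS reduces to the order `C ≻ Cᶜ`, and SSI to a top class all of whose members contain `x`
but not `y`, where WIVIP applies. In the second case, a strict preference `x P y` would survive
splitting off `{X}`, then `{{y}}`, and merging these two, which contradicts WIVIP.
-/

section OrderedPartition

variable {α : Type*}

/-- An ordered partition `Σ₁, …, Σ_l` of `α` into nonempty classes: the lists that occur as class
lists of weak orders. -/
structure IsOrderedPartition (L : List (Finset α)) : Prop where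
  nonempty : ∀ C ∈ L, C.Nonempty
  exists_mem : ∀ a, ∃ C ∈ L, a ∈ C
  pairwise_disjoint : L.Pairwise Disjoint

namespace IsOrderedPartition

variable {C D : Finset α} {L : List (Finset α)}

theorem nodup (h : IsOrderedPartition L) : L.Nodup :=
  h.pairwise_disjoint.imp_of_mem fun hC _ hCD =>
    hCD.ne (h.nonempty _ hC).ne_empty

theorem disjoint_getElem (h : IsOrderedPartition L) {i j : ℕ} (hi : i < L.length)
    (hj : j < L.length) (hij : i ≠ j) : Disjoint L[i] L[j] := by
  have disjoint_of_lt := List.pairwise_iff_getElem.1 h.pairwise_disjoint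
  rcases hij.lt_or_gt with hlt | hgt
  · exact disjoint_of_lt i j hi hj hlt
  · exact (disjoint_of_lt j i hj hi hgt).symm

theorem singleton_eq_univ [Fintype α] (h : IsOrderedPartition [C]) : C = Finset.univ :=
  Finset.eq_univ_iff_forall.2 fun a => by simpa using h.exists_mem a

theorem sum_map_sum [Fintype α] {M : Type*} [AddCommMonoid M] (h : IsOrderedPartition L)
    (f : α → M) : (L.map fun C => ∑ a ∈ C, f a).sum = ∑ a, f a := by
  classical
  have disjoint_classes : (L.toFinset : Set (Finset α)).PairwiseDisjoint id :=
    (List.pairwiseDisjoint_iff_coe_toFinset_pairwise_disjoint h.nodup).2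
      h.pairwise_disjoint
  have union_classes : L.toFinset.biUnion id = Finset.univ :=
    Finset.eq_univ_iff_forall.2 fun a => by simpa using h.exists_mem a
  rw [← List.sum_toFinset _ h.nodup, ← union_classes, Finset.sum_biUnion disjoint_classes]
  rfl

theorem merge [DecidableEq α] (h : IsOrderedPartition (C :: D :: L)) :
    IsOrderedPartition ((D ∪ C) :: L) where
  nonempty := by
    have := h.nonempty
    simp only [List.forall_mem_cons] at this ⊢
    exact ⟨this.2.1.inl, this.2.2⟩
  exists_mem a := by
    have := h.exists_mem a
    simp only [List.exists_mem_cons_iff, Finset.mem_union] at this ⊢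
    tauto
  pairwise_disjoint := by
    have := h.pairwise_disjoint
    simp only [List.pairwise_cons, List.forall_mem_cons] at this
    refine List.pairwise_cons.2 ⟨fun E hE => ?_, this.2.2⟩
    exact Finset.disjoint_union_left.2 ⟨this.2.1 E hE, this.1.2 E hE⟩

end IsOrderedPartition

theorem isOrderedPartition_pair [Fintype α] [DecidableEq α] {C : Finset α} (hC : C.Nonempty)
    (hCc : Cᶜ.Nonempty) : IsOrderedPartition [C, Cᶜ] where
  nonempty := by simp [hC, hCc]
  exists_mem a := by simpa using em (a ∈ C)
  pairwise_disjoint := by simp [disjoint_compl_right]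

theorem isOrderedPartition_triple [Fintype α] [DecidableEq α] {C D : Finset α} (hC : C.Nonempty)
    (hD : D.Nonempty) (hCD : Disjoint C D) (hCDc : (C ∪ D)ᶜ.Nonempty) :
    IsOrderedPartition [C, D, (C ∪ D)ᶜ] where
  nonempty := by
    simp only [List.forall_mem_cons]
    exact ⟨hC, hD, hCDc, by simp⟩
  exists_mem a := by
    simp only [List.exists_mem_cons_iff, Finset.mem_compl, Finset.mem_union]
    tauto
  pairwise_disjoint := by
    have hdisj : Disjoint (C ∪ D) (C ∪ D)ᶜ := disjoint_compl_right
    rw [Finset.disjoint_union_left] at hdisj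
    simp only [List.pairwise_cons, List.forall_mem_cons]
    exact ⟨⟨hCD, hdisj.1, by simp⟩, ⟨hdisj.2, by simp⟩, by simp⟩

/-- The weak order whose classes, from best to worst, are the entries of `L`: an element is weakly
better if it first occurs in an earlier class. -/
def rankRel [DecidableEq α] (L : List (Finset α)) (a b : α) : Prop :=
  L.findIdx (a ∈ ·) ≤ L.findIdx (b ∈ ·)

theorem IsOrderedPartition.findIdx_eq [DecidableEq α] {L : List (Finset α)}
    (h : IsOrderedPartition L) {i : ℕ} (hi : i < L.length) {a : α} (ha : a ∈ L[i]) :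
    L.findIdx (a ∈ ·) = i := by
  refine (List.findIdx_eq hi).2 ⟨decide_eq_true ha, fun j hj => decide_eq_false fun haj => ?_⟩
  exact Finset.disjoint_left.1 (h.disjoint_getElem (hj.trans hi) hi hj.ne) haj ha

/-- The nonempty fibres of `f`, in increasing order of the value of `f`. -/
def levelList [Fintype α] {β : Type*} [LinearOrder β] (f : α → β) : List (Finset α) :=
  ((Finset.univ.image f).sort).map fun b => Finset.univ.filter (f · = b)

end OrderedPartition

theorem IsWeakOrder.exists_rank {α : Type*} [Finite α] {r : α → α → Prop} (h : IsWeakOrder r) :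
    ∃ f : α → ℕ, ∀ a b, r a b ↔ f a ≤ f b := by
  obtain ⟨hrefl, htotal, htrans⟩ := h
  refine ⟨fun a => {c | ¬ r a c}.ncard, fun a b => ⟨fun hab => ?_, fun hle => ?_⟩⟩
  · exact Set.ncard_le_ncard fun c hac hbc => hac (htrans hab hbc)
  · by_contra hab
    have hba : r b a := (htotal a b).resolve_left hab
    refine hle.not_gt (Set.ncard_lt_ncard ⟨fun c hbc hac => hbc (htrans hba hac), fun hsub => ?_⟩)
    exact hsub hab (hrefl b)

section ClassList

omit [Fintype X] [DecidableEq X]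

variable {r : Finset X → Finset X → Prop} {L L' : List (Finset (Finset X))}

theorem isClassList_iff_getElem :
    IsClassList r L ↔ (∀ C ∈ L, C.Nonempty) ∧ (∀ S, ∃ C ∈ L, S ∈ C) ∧
      ∀ (i j : ℕ) (hi : i < L.length) (hj : j < L.length), ∀ S ∈ L[i], ∀ T ∈ L[j],
        (r S T ↔ i ≤ j) := by
  have getD_eq {i : ℕ} (hi : i < L.length) : L.getD i ∅ = L[i] := List.getD_eq_getElem _ _ hi
  refine and_congr_right fun _ => ⟨fun ⟨hcover, hrel⟩ => ⟨fun S => ?_, ?_⟩,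
    fun ⟨hcover, hrel⟩ => ⟨fun S => ?_, ?_⟩⟩
  · obtain ⟨i, ⟨hi, hS⟩, -⟩ := hcover S
    exact ⟨L[i], List.getElem_mem hi, getD_eq hi ▸ hS⟩
  · intro i j hi hj
    simpa only [getD_eq hi, getD_eq hj] using hrel i j hi hj
  · obtain ⟨C, hC, hS⟩ := hcover S
    obtain ⟨i, hi, rfl⟩ := List.getElem_of_mem hC
    refine ⟨i, ⟨hi, (getD_eq hi).symm ▸ hS⟩, fun j ⟨hj, hSj⟩ => ?_⟩
    rw [getD_eq hj] at hSj
    have hSS : r S S := (hrel i i hi hi S hS S hS).2 le_rfl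
    exact le_antisymm ((hrel j i hj hi S hSj S hS).1 hSS) ((hrel i j hi hj S hS S hSj).1 hSS)
  · intro i j hi hj
    simpa only [getD_eq hi, getD_eq hj] using hrel i j hi hj

namespace IsClassList

theorem rel_iff_le (h : IsClassList r L) {i j : ℕ} (hi : i < L.length) (hj : j < L.length)
    {S T : Finset X} (hS : S ∈ L[i]) (hT : T ∈ L[j]) : r S T ↔ i ≤ j :=
  (isClassList_iff_getElem.1 h).2.2 i j hi hj S hS T hT

theorem exists_mem_getElem (h : IsClassList r L) (S : Finset X) :
    ∃ (i : ℕ) (hi : i < L.length), S ∈ L[i] := by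
  obtain ⟨C, hC, hS⟩ := (isClassList_iff_getElem.1 h).2.1 S
  obtain ⟨i, hi, rfl⟩ := List.getElem_of_mem hC
  exact ⟨i, hi, hS⟩

theorem isWeakOrder (h : IsClassList r L) : IsWeakOrder r := by
  choose rank hlt hmem using h.exists_mem_getElem
  have rel_iff (S T : Finset X) : r S T ↔ rank S ≤ rank T :=
    h.rel_iff_le (hlt S) (hlt T) (hmem S) (hmem T)
  refine ⟨fun S => ?_, fun S T => ?_, fun S T U => ?_⟩
  · exact (rel_iff S S).2 le_rfl
  · simpa only [rel_iff] using le_total (rank S) (rank T)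
  · simpa only [rel_iff] using le_trans

theorem isOrderedPartition (h : IsClassList r L) : IsOrderedPartition L where
  nonempty := h.1
  exists_mem := (isClassList_iff_getElem.1 h).2.1
  pairwise_disjoint := List.pairwise_iff_getElem.2 fun i j hi hj hij =>
    Finset.disjoint_left.2 fun S hSi hSj => by
      have hSS : r S S := h.isWeakOrder.1 S
      exact hij.not_ge ((h.rel_iff_le hj hi hSj hSi).1 hSS)

theorem mem_iff_of_mem (h : IsClassList r L) {C : Finset (Finset X)} (hC : C ∈ L)
    {S : Finset X} (hS : S ∈ C) (T : Finset X) : T ∈ C ↔ r S T ∧ r T S := by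
  obtain ⟨i, hi, rfl⟩ := List.getElem_of_mem hC
  obtain ⟨j, hj, hT⟩ := h.exists_mem_getElem T
  rw [h.rel_iff_le hi hj hS hT, h.rel_iff_le hj hi hT hS]
  refine ⟨fun hTi => ?_, fun ⟨hij, hji⟩ => ?_⟩
  · have hTT : r T T := h.isWeakOrder.1 T
    exact ⟨(h.rel_iff_le hi hj hTi hT).1 hTT, (h.rel_iff_le hj hi hT hTi).1 hTT⟩
  · obtain rfl := le_antisymm hij hji
    exact hT

theorem subset (h : IsClassList r L) (h' : IsClassList r L') : L ⊆ L' := by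
  intro C hC
  obtain ⟨S, hS⟩ := h.1 C hC
  obtain ⟨C', hC', hS'⟩ := h'.isOrderedPartition.exists_mem S
  have hCC' : C = C' := by
    ext T
    rw [h.mem_iff_of_mem hC hS, h'.mem_iff_of_mem hC' hS']
  exact hCC' ▸ hC'

theorem pairwise_above (h : IsClassList r L) :
    L.Pairwise fun C D => ∃ S ∈ C, ∀ T ∈ D, ¬ r T S := by
  refine List.pairwise_iff_getElem.2 fun i j hi hj hij => ?_
  obtain ⟨S, hS⟩ := h.1 _ (List.getElem_mem hi)
  exact ⟨S, hS, fun T hT hTS => hij.not_ge ((h.rel_iff_le hj hi hT hS).1 hTS)⟩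

theorem unique (h : IsClassList r L) (h' : IsClassList r L') : L = L' := by
  obtain ⟨hrefl, htotal, -⟩ := h.isWeakOrder
  have : Std.Irrefl fun C D : Finset (Finset X) => ∃ S ∈ C, ∀ T ∈ D, ¬ r T S :=
    ⟨fun C ⟨S, hS, hCS⟩ => hCS S hS (hrefl S)⟩
  have : Std.Antisymm fun C D : Finset (Finset X) => ∃ S ∈ C, ∀ T ∈ D, ¬ r T S :=
    ⟨fun C D ⟨S, hS, hDS⟩ ⟨T, hT, hCT⟩ =>
      ((htotal S T).elim (hCT S hS) (hDS T hT)).elim⟩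
  exact h.pairwise_above.eq_of_mem_iff h'.pairwise_above
    fun C => ⟨fun hC => h.subset h' hC, fun hC => h'.subset h hC⟩

end IsClassList

theorem IsOrderedPartition.isClassList_rankRel [DecidableEq X] (h : IsOrderedPartition L) :
    IsClassList (rankRel L) L :=
  isClassList_iff_getElem.2 ⟨h.nonempty, h.exists_mem, fun i j hi hj S hS T hT => by
    rw [rankRel, h.findIdx_eq hi hS, h.findIdx_eq hj hT]⟩

theorem isClassList_levelList [Fintype X] {β : Type*} [LinearOrder β] {f : Finset X → β}
    (hf : ∀ S T, r S T ↔ f S ≤ f T) : IsClassList r (levelList f) := by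
  refine isClassList_iff_getElem.2 ⟨?_, fun S => ?_, fun i j hi hj S hS T hT => ?_⟩
  · simp only [levelList, List.forall_mem_map, Finset.mem_sort, Finset.forall_mem_image]
    exact fun S _ => ⟨S, by simp⟩
  · exact ⟨Finset.univ.filter (f · = f S), by simp [levelList], by simp⟩
  · simp only [levelList, List.getElem_map, Finset.mem_filter, Finset.mem_univ, true_and] at hS hT
    rw [hf, hS, hT, (Finset.sortedLT_sort _).getElem_le_getElem_iff]

theorem IsWeakOrder.exists_isClassList [Finite X] (h : IsWeakOrder r) : ∃ L, IsClassList r L := by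
  have := Fintype.ofFinite X
  exact h.exists_rank.imp' levelList fun _ hf => isClassList_levelList hf

end ClassList

section FirstNonzero

variable {M : Type*} [DecidableEq M]

/-- The first nonzero entry of a list, or `0` if there is none. Comparing two vectors
lexicographically amounts to finding the sign of the first nonzero entry of their difference. -/
def firstNonzero [Zero M] (l : List M) : M := (l.find? (· ≠ 0)).getD 0

@[simp]
theorem firstNonzero_nil [Zero M] : firstNonzero ([] : List M) = 0 := rfl

theorem firstNonzero_cons [Zero M] (d : M) (l : List M) :
    firstNonzero (d :: l) = if d = 0 then firstNonzero l else d := by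
  by_cases hd : d = 0 <;> simp [firstNonzero, hd]

@[simp]
theorem firstNonzero_singleton [Zero M] (d : M) : firstNonzero [d] = d := by
  by_cases hd : d = 0 <;> simp [firstNonzero_cons, hd]

theorem firstNonzero_eq_zero_iff [Zero M] {l : List M} : firstNonzero l = 0 ↔ ∀ d ∈ l, d = 0 := by
  induction l with
  | nil => simp
  | cons d l ih => by_cases hd : d = 0 <;> simp [firstNonzero_cons, hd, ih]

theorem firstNonzero_append [Zero M] (l m : List M) :
    firstNonzero (l ++ m) = if firstNonzero l = 0 then firstNonzero m else firstNonzero l := by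
  induction l with
  | nil => simp
  | cons d l ih => by_cases hd : d = 0 <;> simp [firstNonzero_cons, hd, ih]

theorem firstNonzero_map_neg [AddGroup M] (l : List M) :
    firstNonzero (l.map (- ·)) = - firstNonzero l := by
  induction l with
  | nil => simp
  | cons d l ih => by_cases hd : d = 0 <;> simp [firstNonzero_cons, hd, ih]

theorem firstNonzero_map_filter [Zero M] {β : Type*} (f : β → M) (p : β → Bool)
    (hf : ∀ b, ¬ p b → f b = 0) (l : List β) :
    firstNonzero ((l.filter p).map f) = firstNonzero (l.map f) := by
  induction l with
  | nil => simp
  | cons b l ih => by_cases hb : p b <;> simp [firstNonzero_cons, hb, ih, hf]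

theorem firstNonzero_append_singleton_of_sum_eq_zero [AddMonoid M] {l : List M} {w : M}
    (hsum : (l ++ [w]).sum = 0) : firstNonzero (l ++ [w]) = firstNonzero l := by
  by_cases hl : firstNonzero l = 0
  · have hw : w = 0 := by
      simpa [List.sum_eq_zero (firstNonzero_eq_zero_iff.1 hl)] using hsum
    simp [firstNonzero_append, hw, hl]
  · simp [firstNonzero_append, hl]

end FirstNonzero

section Margin

omit [Fintype X]

variable {C D : Finset (Finset X)} {L : List (Finset (Finset X))} {x y : X}

/-- By how many coalitions of `C` the individual `x` is ahead of `y`: `|C[x]| - |C[y]|`. -/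
def margin (x y : X) (C : Finset (Finset X)) : ℤ := count C x - count C y

theorem margin_eq_zero_iff : margin x y C = 0 ↔ count C x = count C y := by
  rw [margin, sub_eq_zero, Nat.cast_inj]

theorem neg_margin (x y : X) (C : Finset (Finset X)) : - margin x y C = margin y x C :=
  neg_sub _ _

theorem margin_eq_sum (x y : X) (C : Finset (Finset X)) :
    margin x y C = ∑ S ∈ C, ((if x ∈ S then 1 else 0) - (if y ∈ S then 1 else 0)) := by
  simp [margin, count]

@[simp]
theorem margin_empty (x y : X) : margin x y ∅ = 0 := rfl

theorem margin_union (h : Disjoint C D) (x y : X) :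
    margin x y (C ∪ D) = margin x y C + margin x y D := by
  simp only [margin_eq_sum, Finset.sum_union h]

theorem margin_sdiff (h : D ⊆ C) (x y : X) :
    margin x y (C \ D) = margin x y C - margin x y D := by
  simp only [margin_eq_sum, Finset.sum_sdiff_eq_sub h]

theorem margin_univ [Fintype X] (x y : X) : margin x y Finset.univ = 0 := by
  refine margin_eq_zero_iff.2 (Finset.card_equiv (Equiv.finsetCongr (Equiv.swap x y)) fun S => ?_)
  simp [Finset.mem_map_equiv]

theorem margin_singleton_univ [Fintype X] (x y : X) : margin x y {Finset.univ} = 0 := by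
  simp [margin, count, Finset.filter_singleton]

theorem IsOrderedPartition.sum_margin [Finite X] (h : IsOrderedPartition L) (x y : X) :
    (L.map (margin x y)).sum = 0 := by
  have := Fintype.ofFinite X
  rw [← margin_univ x y, margin_eq_sum, ← h.sum_map_sum]
  exact congrArg List.sum (List.map_congr_left fun C _ => margin_eq_sum x y C)

theorem margin_pos_of_forall_mem (hx : ∀ S ∈ C, x ∈ S) (hy : ∃ S ∈ C, y ∉ S) :
    0 < margin x y C := by
  obtain ⟨S, hS, hyS⟩ := hy
  have hlt : count C y < C.card :=
    Finset.card_lt_card (Finset.filter_ssubset.2 ⟨S, hS, hyS⟩)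
  have heq : count C x = C.card := congrArg Finset.card (Finset.filter_true_of_mem hx)
  rw [margin, heq]
  lia

theorem exists_subset_margin_eq (h : 0 ≤ margin x y C) :
    ∃ E ⊆ C, (∀ S ∈ E, x ∈ S ∧ y ∉ S) ∧ margin x y E = margin x y C := by
  obtain ⟨E, hE, hcard⟩ := Finset.exists_subset_card_eq
    (Finset.le_card_sdiff (C.filter (y ∈ ·)) (C.filter (x ∈ ·)))
  have mem_of_mem (S) (hS : S ∈ E) : S ∈ C ∧ x ∈ S ∧ y ∉ S := by
    have := hE hS
    simp only [Finset.mem_sdiff, Finset.mem_filter] at this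
    tauto
  have hx : count E x = E.card :=
    congrArg Finset.card (Finset.filter_true_of_mem fun S hS => (mem_of_mem S hS).2.1)
  have hy : count E y = 0 :=
    congrArg Finset.card (Finset.filter_false_of_mem fun S hS => (mem_of_mem S hS).2.2)
  refine ⟨E, fun S hS => (mem_of_mem S hS).1, fun S hS => (mem_of_mem S hS).2, ?_⟩
  rw [margin, hx, hy, hcard]
  simp only [margin, count] at h ⊢
  lia

/-- The margin of `x` over `y` in the first class of `L` where it is nonzero, or `0` if there is no
such class. Its sign is the comparison of `x` and `y` in `R^L`. -/
def leadingMargin (x y : X) (L : List (Finset (Finset X))) : ℤ := firstNonzero (L.map (margin x y))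

theorem leadingMargin_cons (x y : X) (C : Finset (Finset X)) (L : List (Finset (Finset X))) :
    leadingMargin x y (C :: L) = if margin x y C = 0 then leadingMargin x y L else margin x y C :=
  firstNonzero_cons _ _

theorem neg_leadingMargin (x y : X) (L : List (Finset (Finset X))) :
    - leadingMargin x y L = leadingMargin y x L := by
  rw [leadingMargin, ← firstNonzero_map_neg, List.map_map]
  exact congrArg firstNonzero (List.map_congr_left fun C _ => neg_margin x y C)

theorem map_margin_set_set (h : IsOrderedPartition L) {k₁ k₂ : ℕ} (hk₁ : k₁ < L.length)
    (hk₂ : k₂ < L.length) {Δ : Finset (Finset X)} (hΔ : Δ ⊆ L[k₁]) (hmargin : margin x y Δ = 0) :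
    ((L.set k₁ (L[k₁] \ Δ)).set k₂ (L[k₂] ∪ Δ)).map (margin x y) = L.map (margin x y) := by
  have margin_source : margin x y (L[k₁] \ Δ) = margin x y L[k₁] := by
    rw [margin_sdiff hΔ, hmargin, sub_zero]
  have margin_target : margin x y (L[k₂] ∪ Δ) = margin x y L[k₂] := by
    rcases eq_or_ne k₂ k₁ with rfl | hne
    · rw [Finset.union_eq_left.2 hΔ]
    · have hdisj : Disjoint L[k₂] Δ := (h.disjoint_getElem hk₂ hk₁ hne).mono_right hΔ
      rw [margin_union hdisj, hmargin, add_zero]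
  rw [List.map_set, List.map_set, margin_source, margin_target, ← List.map_set,
    List.set_getElem_self, ← List.map_set, List.set_getElem_self]

theorem leadingMargin_slide (h : IsOrderedPartition L) {k₁ k₂ : ℕ} (hk₁ : k₁ < L.length)
    (hk₂ : k₂ < L.length) {Δ : Finset (Finset X)} (hΔ : Δ ⊆ L.getD k₁ ∅)
    (hmargin : margin x y Δ = 0) :
    leadingMargin x y (slide L k₁ k₂ Δ) = leadingMargin x y L := by
  rw [List.getD_eq_getElem _ _ hk₁] at hΔ
  rw [leadingMargin, slide, List.getD_eq_getElem _ _ hk₁, List.getD_eq_getElem _ _ hk₂,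
    firstNonzero_map_filter _ _ (by simp), map_margin_set_set h hk₁ hk₂ hΔ hmargin, leadingMargin]

theorem slide_zero_one_self (h : IsOrderedPartition (C :: D :: L)) :
    slide (C :: D :: L) 0 1 C = (D ∪ C) :: L := by
  have ne_empty (E) (hE : E ∈ (D ∪ C) :: L) : E ≠ ∅ := (h.merge.nonempty E hE).ne_empty
  simp only [List.forall_mem_cons] at ne_empty
  simpa [slide, ne_empty.1] using ne_empty.2

theorem leadingMargin_merge (h : IsOrderedPartition (C :: D :: L)) (hC : margin x y C = 0) :
    leadingMargin x y ((D ∪ C) :: L) = leadingMargin x y (C :: D :: L) := by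
  rw [← slide_zero_one_self h]
  exact leadingMargin_slide h (by simp) (by simp) subset_rfl hC

end Margin

section Lexcel

omit [Fintype X]

variable {r : Finset X → Finset X → Prop} {L : List (Finset (Finset X))}

theorem geLex_cons_cons (a b : ℕ) (as bs : List ℕ) :
    GeLex (a :: as) (b :: bs) ↔ b < a ∨ a = b ∧ GeLex as bs := by
  constructor
  · rintro (heq | ⟨_ | k, hk, hagree, hlt⟩)
    · exact Or.inr ⟨(List.cons.inj heq).1, Or.inl (List.cons.inj heq).2⟩
    · exact Or.inl (by simpa using hlt)
    · exact Or.inr ⟨by simpa using hagree 0 k.succ_pos, Or.inr ⟨k, by simpa using hk,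
        fun j hj => by simpa using hagree (j + 1) (by lia), by simpa using hlt⟩⟩
  · rintro (hlt | ⟨rfl, rfl | ⟨k, hk, hagree, hlt⟩⟩)
    · exact Or.inr ⟨0, by simp, by simp, by simpa using hlt⟩
    · exact Or.inl rfl
    · refine Or.inr ⟨k + 1, by simpa using hk, ?_, by simpa using hlt⟩
      rintro (_ | j) hj
      · simp
      · simpa using hagree j (by lia)

theorem geLex_theta_iff (L : List (Finset (Finset X))) (x y : X) :
    GeLex (theta L x) (theta L y) ↔ 0 ≤ leadingMargin x y L := by
  induction L with
  | nil => simp [theta, GeLex, leadingMargin]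
  | cons C L ih =>
    change GeLex (count C x :: theta L x) (count C y :: theta L y) ↔ _
    rw [geLex_cons_cons, ih, leadingMargin_cons, margin]
    split_ifs <;> lia

theorem RL_iff (h : IsClassList r L) (x y : X) : RL r x y ↔ 0 ≤ leadingMargin x y L := by
  rw [← geLex_theta_iff]
  exact ⟨fun hRL => hRL L h, fun hge L' h' => h.unique h' ▸ hge⟩

theorem strictPart_RL_iff (h : IsClassList r L) (x y : X) :
    StrictPart (RL r) x y ↔ 0 < leadingMargin x y L := by
  rw [StrictPart, RL_iff h, RL_iff h, ← neg_leadingMargin x y]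
  lia

theorem wivip_RL : WIVIP (RL (X := X)) := by
  intro r C₁ C₂ h x y hx hy
  have hpos : 0 < margin x y C₁ := margin_pos_of_forall_mem hx hy
  rwa [strictPart_RL_iff h, leadingMargin_cons, if_neg hpos.ne']

theorem iws_RL [Finite X] : IWS (RL (X := X)) := by
  intro r r' L Γ W _ h h' x y
  have hsum := h.isOrderedPartition.sum_margin x y
  rw [List.map_append] at hsum
  rw [strictPart_RL_iff h, strictPart_RL_iff h', leadingMargin, leadingMargin, List.map_append,
    List.map_append, List.map_singleton, firstNonzero_append_singleton_of_sum_eq_zero hsum]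
  intro hpos
  rwa [firstNonzero_append, if_neg hpos.ne']

theorem ssi_RL : SSI (RL (X := X)) := by
  intro r r' L k₁ k₂ x y Δ h hk₁ hk₂ hΔ hcount h' a ha b hb
  have hmargin : margin a b Δ = 0 := by
    rw [margin_eq_zero_iff]
    rcases ha with rfl | rfl <;> rcases hb with rfl | rfl <;> simp [hcount]
  rw [RL_iff h, RL_iff h', leadingMargin_slide h.isOrderedPartition hk₁ hk₂ hΔ hmargin]

end Lexcel

section Axioms

omit [Fintype X]

variable {R : (Finset X → Finset X → Prop) → X → X → Prop} {r r' : Finset X → Finset X → Prop}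
  {C D : Finset (Finset X)} {L : List (Finset (Finset X))} {x y : X}

omit [DecidableEq X] in
theorem AgreeOn.rel_iff {p q : X → X → Prop} (h : AgreeOn p q x y) : p x y ↔ q x y :=
  h x (by simp) y (by simp)

omit [DecidableEq X] in
theorem AgreeOn.strictPart_iff {p q : X → X → Prop} (h : AgreeOn p q x y) :
    StrictPart p x y ↔ StrictPart q x y :=
  and_congr h.rel_iff (not_congr (h y (by simp) x (by simp)))

theorem SSI.agreeOn_merge (hSSI : SSI R) (h : IsClassList r (C :: D :: L))
    (h' : IsClassList r' ((D ∪ C) :: L)) (hC : margin x y C = 0) :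
    AgreeOn (R r) (R r') x y :=
  hSSI r r' (C :: D :: L) 0 1 x y C h (by simp) (by simp) subset_rfl (margin_eq_zero_iff.1 hC)
    (by rwa [slide_zero_one_self h.isOrderedPartition])

theorem SSI.agreeOn_shrink_top [Fintype X] (hSSI : SSI R) {E : Finset (Finset X)}
    (h : IsClassList r [C, Cᶜ]) (h' : IsClassList r' [E, Eᶜ]) (hEC : E ⊆ C)
    (hE : margin x y E = margin x y C) : AgreeOn (R r) (R r') x y := by
  have hslide : slide [C, Cᶜ] 0 1 (C \ E) = [E, Eᶜ] := by
    have hbottom : Cᶜ ∪ C \ E = Eᶜ := by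
      rw [Finset.sdiff_eq_inter_compl, Finset.union_inter_distrib_left, Finset.union_comm,
        Finset.union_compl, Finset.univ_inter,
        Finset.union_eq_right.2 (Finset.compl_subset_compl.2 hEC)]
    have ne_empty (F) (hF : F ∈ [E, Eᶜ]) : F ≠ ∅ := (h'.1 F hF).ne_empty
    simpa [slide, Finset.sdiff_sdiff_eq_self hEC, hbottom] using ne_empty
  have hcount : count (C \ E) x = count (C \ E) y :=
    margin_eq_zero_iff.1 (by rw [margin_sdiff hEC, hE, sub_self])
  exact hSSI r r' [C, Cᶜ] 0 1 x y (C \ E) h (by simp) (by simp) Finset.sdiff_subset hcount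
    (by rwa [hslide])

theorem strictPart_of_dichotomous [Fintype X] (hWIVIP : WIVIP R) (hSSI : SSI R)
    (h : IsClassList r [C, Cᶜ]) (hpos : 0 < margin x y C) : StrictPart (R r) x y := by
  obtain ⟨E, hEC, mem_of_mem, hE⟩ := exists_subset_margin_eq hpos.le
  have hE_ne : E.Nonempty := Finset.nonempty_iff_ne_empty.2 fun h => by simp [h, ← hE] at hpos
  have hEc_ne : Eᶜ.Nonempty := (h.1 Cᶜ (by simp)).mono (Finset.compl_subset_compl.2 hEC)
  have h' := (isOrderedPartition_pair hE_ne hEc_ne).isClassList_rankRel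
  rw [(hSSI.agreeOn_shrink_top h h' hEC hE).strictPart_iff]
  exact hWIVIP _ E Eᶜ h' x y (fun S hS => (mem_of_mem S hS).1)
    (hE_ne.imp fun S hS => ⟨hS, (mem_of_mem S hS).2⟩)

theorem strictPart_of_margin_head_pos [Finite X] (hWIVIP : WIVIP R) (hIWS : IWS R)
    (hSSI : SSI R) (h : IsClassList r (C :: L)) (hpos : 0 < margin x y C) :
    StrictPart (R r) x y := by
  have := Fintype.ofFinite X
  have hC_ne : C.Nonempty := h.1 C (by simp)
  have hCc_ne : Cᶜ.Nonempty := by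
    refine Finset.nonempty_iff_ne_empty.2 fun hempty => hpos.ne' ?_
    rw [(Finset.compl_eq_empty_iff C).1 hempty, margin_univ]
  have hpair := (isOrderedPartition_pair hC_ne hCc_ne).isClassList_rankRel
  exact hIWS _ r [C] L Cᶜ (by simp) hpair h x y (strictPart_of_dichotomous hWIVIP hSSI hpair hpos)

theorem strictPart_of_leadingMargin_pos [Finite X] (hWIVIP : WIVIP R) (hIWS : IWS R)
    (hSSI : SSI R) (h : IsClassList r (C :: L)) (hpos : 0 < leadingMargin x y (C :: L)) :
    StrictPart (R r) x y := by
  induction L generalizing C r with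
  | nil =>
    have hC : 0 < margin x y C := by simpa [leadingMargin] using hpos
    exact strictPart_of_margin_head_pos hWIVIP hIWS hSSI h hC
  | cons D L ih =>
    by_cases hC : margin x y C = 0
    · have hmerge := h.isOrderedPartition.merge.isClassList_rankRel
      rw [(hSSI.agreeOn_merge h hmerge hC).strictPart_iff]
      exact ih hmerge (by rwa [leadingMargin_merge h.isOrderedPartition hC])
    · rw [leadingMargin_cons, if_neg hC] at hpos
      exact strictPart_of_margin_head_pos hWIVIP hIWS hSSI h hpos

theorem not_strictPart_of_isClassList_univ [Fintype X] (hWIVIP : WIVIP R) (hIWS : IWS R)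
    (hSSI : SSI R) (h : IsClassList r [Finset.univ]) (x y : X) : ¬ StrictPart (R r) x y := by
  intro hstrict
  have hxy : x ≠ y := by
    rintro rfl
    exact hstrict.2 hstrict.1
  have huniv_ne : (Finset.univ : Finset X) ≠ {y} := fun heq =>
    hxy (Finset.mem_singleton.1 (heq ▸ Finset.mem_univ x))
  let C : Finset (Finset X) := {Finset.univ}
  let D : Finset (Finset X) := {{y}}
  have hempty : ∅ ∈ (C ∪ D)ᶜ := by
    simp [C, D, (Finset.univ_nonempty_iff.2 ⟨x⟩).ne_empty.symm,
      (Finset.singleton_ne_empty y).symm]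
  have hpair : IsOrderedPartition [C, Cᶜ] := isOrderedPartition_pair (by simp [C])
    ⟨∅, Finset.compl_subset_compl.2 Finset.subset_union_left hempty⟩
  have htriple : IsOrderedPartition [C, D, (C ∪ D)ᶜ] :=
    isOrderedPartition_triple (by simp [C]) (by simp [D]) (by simpa [C, D] using huniv_ne)
      ⟨∅, hempty⟩
  have hC : margin x y C = 0 := margin_singleton_univ x y
  have hstrict_pair : StrictPart (R (rankRel [C, Cᶜ])) x y := by
    refine (hSSI.agreeOn_merge hpair.isClassList_rankRel ?_ hC).strictPart_iff.2 hstrict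
    rwa [Finset.union_comm, Finset.union_compl]
  have hstrict_triple : StrictPart (R (rankRel [C, D, (C ∪ D)ᶜ])) x y :=
    hIWS _ _ [C] [D, (C ∪ D)ᶜ] Cᶜ (by simp) hpair.isClassList_rankRel
      htriple.isClassList_rankRel x y hstrict_pair
  have hmerge := htriple.merge.isClassList_rankRel
  have hstrict_merge : StrictPart (R (rankRel [D ∪ C, (C ∪ D)ᶜ])) x y :=
    (hSSI.agreeOn_merge htriple.isClassList_rankRel hmerge hC).strictPart_iff.1 hstrict_triple
  have hopposite : StrictPart (R (rankRel [D ∪ C, (C ∪ D)ᶜ])) y x :=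
    hWIVIP _ _ _ hmerge y x (by simp [C, D]) ⟨{y}, by simp [D], by simpa using hxy⟩
  exact hopposite.2 hstrict_merge.1

theorem rel_of_leadingMargin_eq_zero [Finite X] (hR : IsSRS R) (hWIVIP : WIVIP R) (hIWS : IWS R)
    (hSSI : SSI R) (h : IsClassList r (C :: L)) (hzero : leadingMargin x y (C :: L) = 0) :
    R r x y := by
  have := Fintype.ofFinite X
  induction L generalizing C r with
  | nil =>
    obtain rfl := h.isOrderedPartition.singleton_eq_univ
    by_contra hnot
    have hyx : R r y x := ((hR r h.isWeakOrder).2.1 x y).resolve_left hnot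
    exact not_strictPart_of_isClassList_univ hWIVIP hIWS hSSI h y x ⟨hyx, hnot⟩
  | cons D L ih =>
    have hC : margin x y C = 0 := firstNonzero_eq_zero_iff.1 hzero _ (by simp)
    have hmerge := h.isOrderedPartition.merge.isClassList_rankRel
    rw [(hSSI.agreeOn_merge h hmerge hC).rel_iff]
    exact ih hmerge (by rwa [leadingMargin_merge h.isOrderedPartition hC])

theorem eq_RL_of_wivip_of_iws_of_ssi [Finite X] (hR : IsSRS R) (hWIVIP : WIVIP R) (hIWS : IWS R)
    (hSSI : SSI R) (hr : IsWeakOrder r) : R r = RL r := by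
  obtain ⟨_ | ⟨C, L⟩, h⟩ := hr.exists_isClassList
  · simpa using h.isOrderedPartition.exists_mem ∅
  ext x y
  rw [RL_iff h]
  refine ⟨fun hxy => ?_, fun hnonneg => ?_⟩
  · by_contra! hneg
    have hpos : 0 < leadingMargin y x (C :: L) := by
      rwa [← neg_leadingMargin, neg_pos]
    exact (strictPart_of_leadingMargin_pos hWIVIP hIWS hSSI h hpos).2 hxy
  · rcases hnonneg.eq_or_lt with hzero | hpos
    · exact rel_of_leadingMargin_eq_zero hR hWIVIP hIWS hSSI h hzero.symm
    · exact (strictPart_of_leadingMargin_pos hWIVIP hIWS hSSI h hpos).1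

end Axioms

/-- Theorem (characterization of the lexicographic excellence solution, `|X| ≥ 2`):
an SRS satisfies WIVIP, IWS and SSI iff it is `R^L`. -/
theorem lexcel_characterization (hX : 2 ≤ Fintype.card X)
    (R : (Finset X → Finset X → Prop) → X → X → Prop) (hR : IsSRS R) :
    (WIVIP R ∧ IWS R ∧ SSI R) ↔ (∀ r, IsWeakOrder r → R r = RL r) := by
  refine ⟨fun ⟨hWIVIP, hIWS, hSSI⟩ r hr => eq_RL_of_wivip_of_iws_of_ssi hR hWIVIP hIWS hSSI hr,
    fun hRL => ⟨?_, ?_, ?_⟩⟩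
  · intro r C₁ C₂ h
    rw [hRL r h.isWeakOrder]
    exact wivip_RL r C₁ C₂ h
  · intro r r' L Γ W hL h h'
    rw [hRL r h.isWeakOrder, hRL r' h'.isWeakOrder]
    exact iws_RL r r' L Γ W hL h h'
  · intro r r' L k₁ k₂ x y Δ h hk₁ hk₂ hΔ hcount h'
    rw [hRL r h.isWeakOrder, hRL r' h'.isWeakOrder]
    exact ssi_RL r r' L k₁ k₂ x y Δ h hk₁ hk₂ hΔ hcount h'

end SocialRanking
end

section
/- For any finite nonempty set X, any ≿ ∈ ℛ(𝔛), and any x, y ∈ X: if x P^L_≿ y (x is strictly above y under the lexicographic excellence solution), then x R^P_≿ y (x is weakly above y under plurality) and x R^IIS_≿ y (x is weakly above y under the intersection initial segment rule). -/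
/-!
Social ranking solutions (SRSs).  The set of individuals is a finite type `X`;
coalitions are elements of `Finset X` (so the domain of a power relation is the
whole power set `𝔛 = 2^X`).  A weak order `≿ ∈ ℛ(𝔛)` is encoded as a relation
`r : Finset X → Finset X → Prop` together with (when needed) its list of
equivalence classes `L = [Σ₁, …, Σ_l]` in strictly decreasing order
(`IsClassList r L`).
-/

namespace SocialRanking

variable {X : Type*} [Fintype X] [DecidableEq X]

theorem geLex_cons_cons_iff {a b : ℕ} {s t : List ℕ} :
    GeLex (a :: s) (b :: t) ↔ b < a ∨ a = b ∧ GeLex s t := by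
  constructor
  · rintro (heq | ⟨k, hk, hagree, hlt⟩)
    · obtain ⟨rfl, rfl⟩ := List.cons_eq_cons.mp heq
      exact Or.inr ⟨rfl, Or.inl rfl⟩
    · cases k with
      | zero => exact Or.inl hlt
      | succ k =>
        exact Or.inr ⟨hagree 0 k.succ_pos, Or.inr ⟨k, Nat.lt_of_succ_lt_succ hk,
          fun j hj => hagree (j + 1) (Nat.succ_lt_succ hj), hlt⟩⟩
  · rintro (hlt | ⟨rfl, rfl | ⟨k, hk, hagree, hlt⟩⟩)
    · exact Or.inr ⟨0, Nat.succ_pos _, fun j hj => absurd hj j.not_lt_zero, hlt⟩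
    · exact Or.inl rfl
    · refine Or.inr ⟨k + 1, Nat.succ_lt_succ hk, fun j hj => ?_, hlt⟩
      cases j with
      | zero => rfl
      | succ j => exact hagree j (Nat.lt_of_succ_lt_succ hj)

theorem GeLex.getD_zero_le {a b : List ℕ} (h : GeLex a b) : b.getD 0 0 ≤ a.getD 0 0 := by
  obtain rfl | ⟨k, -, hagree, hlt⟩ := h
  · exact le_rfl
  · obtain rfl | hk := k.eq_zero_or_pos
    · exact hlt.le
    · exact (hagree 0 hk).ge

section Families

variable {α : Type*} [DecidableEq α] {C : Finset (Finset α)} {L : List (Finset (Finset α))}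
  {x y : α}

theorem count_le_card : count C x ≤ C.card :=
  Finset.card_filter_le _ _

theorem count_eq_card_iff : count C x = C.card ↔ ∀ S ∈ C, x ∈ S :=
  Finset.card_filter_eq_iff

theorem forall_mem_of_count_le (hle : count C y ≤ count C x) (hy : ∀ S ∈ C, y ∈ S) :
    ∀ S ∈ C, x ∈ S :=
  count_eq_card_iff.mp (count_le_card.antisymm ((count_eq_card_iff.mpr hy).ge.trans hle))

theorem theta_getD (k : ℕ) : (theta L x).getD k 0 = count (L.getD k ∅) x :=
  List.getD_map (f := fun C => count C x) (d := ∅) ..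

theorem count_getD_zero_le_of_geLex (h : GeLex (theta L x) (theta L y)) :
    count (L.getD 0 ∅) y ≤ count (L.getD 0 ∅) x := by
  simpa only [theta_getD] using h.getD_zero_le

variable [Fintype α]

theorem eIIS_cons :
    eIIS (C :: L) x = if ∀ S ∈ C, x ∈ S then eIIS L x + 1 else 0 := by
  simp only [eIIS, List.takeWhile_cons, decide_eq_true_iff]
  split_ifs <;> rfl

-- While `y` lies in every coalition of the classes read so far, its counts are maximal, so `x`
-- can only tie with it, and a tie puts `x` in every coalition of these classes as well.
theorem eIIS_le_of_geLex (h : GeLex (theta L x) (theta L y)) : eIIS L y ≤ eIIS L x := by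
  induction L with
  | nil => exact le_rfl
  | cons C L ih =>
    rw [eIIS_cons, eIIS_cons]
    by_cases hy : ∀ S ∈ C, y ∈ S
    · have not_lt : ¬count C y < count C x :=
        (count_le_card.trans (count_eq_card_iff.mpr hy).ge).not_gt
      obtain ⟨tie, tail⟩ := (geLex_cons_cons_iff.mp h).resolve_left not_lt
      have hx : ∀ S ∈ C, x ∈ S := forall_mem_of_count_le tie.ge hy
      rw [if_pos hy, if_pos hx]
      exact Nat.succ_le_succ (ih tail)
    · rw [if_neg hy]
      exact Nat.zero_le _

theorem lexcel_strict_implies_general (h : GeLex (theta L x) (theta L y)) :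
    count (L.getD 0 ∅) y ≤ count (L.getD 0 ∅) x ∧ eIIS L y ≤ eIIS L x :=
  ⟨count_getD_zero_le_of_geLex h, eIIS_le_of_geLex h⟩

end Families

/-- If `x P^L_≿ y` then `x R^P_≿ y` and `x R^IIS_≿ y`. -/
theorem lexcel_strict_implies [Nonempty X] (r : Finset X → Finset X → Prop)
    (hr : IsWeakOrder r) (x y : X) (h : StrictPart (RL r) x y) :
    RP r x y ∧ RIIS r x y :=
  ⟨fun L hL => (lexcel_strict_implies_general (h.1 L hL)).1,
    fun L hL => (lexcel_strict_implies_general (h.1 L hL)).2⟩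

end SocialRanking
end

section
/- An SRS R : ℛ(𝔛) → ℛ(X) satisfies slide independence (SI) if and only if it satisfies Top slide independence (Top-SI), i.e., the condition of SI restricted to slides out of the best equivalence class (k_1 = 1). -/
/-!
Social ranking solutions (SRSs).  The set of individuals is a finite type `X`;
coalitions are elements of `Finset X` (so the domain of a power relation is the
whole power set `𝔛 = 2^X`).  A weak order `≿ ∈ ℛ(𝔛)` is encoded as a relation
`r : Finset X → Finset X → Prop` together with (when needed) its list of
equivalence classes `L = [Σ₁, …, Σ_l]` in strictly decreasing order
(`IsClassList r L`).
-/

namespace SocialRanking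

variable {X : Type*} [Fintype X] [DecidableEq X]

/-!
Sliding `Δ` from class `k₁` to class `k₂` may pass through any class `m` on the way, because the
resulting classes are given by a rule that forgets `m`: a coalition in `Δ` is in class `k₂`, every
other coalition is where it was. Taking `m` to be the best class gives an auxiliary order `≿''`.
Both `≿` and `≿'` arise from `≿''` by sliding `Δ` out of the best class, to `k₁` and to `k₂`
respectively, so two applications of Top-SI compare `≿` with `≿'`. These slides move a proper
subfamily because class `m` keeps coalitions outside `Δ`.
-/

section General

variable {Y : Type*}

theorem AgreeOn.symm {p q : Y → Y → Prop} {x y : Y} (hpq : AgreeOn p q x y) :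
    AgreeOn q p x y :=
  fun a ha b hb => (hpq a ha b hb).symm

theorem AgreeOn.trans {p q s : Y → Y → Prop} {x y : Y} (hpq : AgreeOn p q x y)
    (hqs : AgreeOn q s x y) : AgreeOn p s x y :=
  fun a ha b hb => (hpq a ha b hb).trans (hqs a ha b hb)

theorem lt_length_of_mem_getD {α : Type*} {L : List (Finset α)} {i : ℕ} {a : α}
    (ha : a ∈ L.getD i ∅) : i < L.length := by
  by_contra! hi
  rw [List.getD_eq_default _ _ hi] at ha
  exact Finset.notMem_empty a ha

theorem ext_mem_getD {α : Type*} {L M : List (Finset α)} (hlen : L.length = M.length)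
    (hmem : ∀ i a, a ∈ L.getD i ∅ ↔ a ∈ M.getD i ∅) : L = M := by
  refine List.ext_getElem hlen fun i hL hM => Finset.ext fun a => ?_
  simpa only [List.getD_eq_getElem _ _ hL, List.getD_eq_getElem _ _ hM] using hmem i a

/-- An ordered partition of the coalitions into nonempty classes: the part of `IsClassList r L`
that does not mention `r`. These are exactly the lists `L` that are the class list of some
relation, see `exists_isClassList_iff`. -/
def IsOrderedPartition_s7 (L : List (Finset (Finset Y))) : Prop :=
  (∀ C ∈ L, C.Nonempty) ∧ ∀ S : Finset Y, ∃! i : ℕ, i < L.length ∧ S ∈ L.getD i ∅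

theorem exists_isClassList_iff {L : List (Finset (Finset Y))} :
    (∃ r, IsClassList r L) ↔ IsOrderedPartition_s7 L := by
  constructor
  · rintro ⟨r, hne, huniq, -⟩
    exact ⟨hne, huniq⟩
  · rintro ⟨hne, huniq⟩
    choose index hindex hindex_unique using huniq
    refine ⟨fun S T => index S ≤ index T, hne, fun S => ⟨index S, hindex S, hindex_unique S⟩, ?_⟩
    intro i j hi hj S hS T hT
    rw [hindex_unique S i ⟨hi, hS⟩, hindex_unique T j ⟨hj, hT⟩]

namespace IsOrderedPartition_s7

variable {L : List (Finset (Finset Y))} {i j k : ℕ}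

theorem getD_nonempty (hL : IsOrderedPartition_s7 L) (hk : k < L.length) :
    (L.getD k ∅).Nonempty := by
  rw [List.getD_eq_getElem _ _ hk]
  exact hL.1 _ (List.getElem_mem hk)

theorem index_unique (hL : IsOrderedPartition_s7 L) {S : Finset Y} (hi : S ∈ L.getD i ∅)
    (hj : S ∈ L.getD j ∅) : i = j :=
  (hL.2 S).unique ⟨lt_length_of_mem_getD hi, hi⟩ ⟨lt_length_of_mem_getD hj, hj⟩

variable [DecidableEq Y] {k₁ k₂ m : ℕ} {Δ : Finset (Finset Y)}

theorem slide_eq_set_set (hL : IsOrderedPartition_s7 L) (hk₂ : k₂ < L.length)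
    (hΔ : Δ ⊂ L.getD k₁ ∅) :
    slide L k₁ k₂ Δ = (L.set k₁ (L.getD k₁ ∅ \ Δ)).set k₂ (L.getD k₂ ∅ ∪ Δ) := by
  refine List.filter_eq_self.2 fun C hC => ?_
  suffices C.Nonempty by simpa using this.ne_empty
  rcases List.mem_or_eq_of_mem_set hC with hC | rfl
  · rcases List.mem_or_eq_of_mem_set hC with hC | rfl
    · exact hL.1 C hC
    · exact Finset.sdiff_nonempty.2 hΔ.2
  · exact (hL.getD_nonempty hk₂).inl

theorem length_slide (hL : IsOrderedPartition_s7 L) (hk₂ : k₂ < L.length)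
    (hΔ : Δ ⊂ L.getD k₁ ∅) : (slide L k₁ k₂ Δ).length = L.length := by
  rw [hL.slide_eq_set_set hk₂ hΔ, List.length_set, List.length_set]

theorem getD_slide (hL : IsOrderedPartition_s7 L) (hk₂ : k₂ < L.length) (hΔ : Δ ⊂ L.getD k₁ ∅)
    (i : ℕ) :
    (slide L k₁ k₂ Δ).getD i ∅ =
      if i = k₂ then L.getD k₂ ∅ ∪ Δ else if i = k₁ then L.getD k₁ ∅ \ Δ else L.getD i ∅ := by
  rw [hL.slide_eq_set_set hk₂ hΔ]
  grind

theorem mem_getD_slide (hL : IsOrderedPartition_s7 L) (hk₂ : k₂ < L.length)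
    (hΔ : Δ ⊂ L.getD k₁ ∅) {S : Finset Y} :
    S ∈ (slide L k₁ k₂ Δ).getD i ∅ ↔ if S ∈ Δ then i = k₂ else S ∈ L.getD i ∅ := by
  have hclass : S ∈ Δ → S ∈ L.getD i ∅ → i = k₁ := fun hS hi => hL.index_unique hi (hΔ.1 hS)
  rw [hL.getD_slide hk₂ hΔ]
  split_ifs <;> simp_all

theorem ssubset_getD_slide (hL : IsOrderedPartition_s7 L) (hm : m < L.length)
    (hΔ : Δ ⊂ L.getD k₁ ∅) : Δ ⊂ (slide L k₁ m Δ).getD m ∅ := by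
  have hsub : Δ ⊆ (slide L k₁ m Δ).getD m ∅ := fun S hS => by
    rw [hL.mem_getD_slide hm hΔ, if_pos hS]
  obtain ⟨S, hSm, hSΔ⟩ : ∃ S ∈ L.getD m ∅, S ∉ Δ := by
    by_cases hmk : m = k₁
    · exact hmk ▸ Finset.exists_of_ssubset hΔ
    · obtain ⟨S, hS⟩ := hL.getD_nonempty hm
      exact ⟨S, hS, fun hSΔ => hmk (hL.index_unique hS (hΔ.1 hSΔ))⟩
  refine (Finset.ssubset_iff_of_subset hsub).2 ⟨S, ?_, hSΔ⟩
  rwa [hL.mem_getD_slide hm hΔ, if_neg hSΔ]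

protected theorem slide (hL : IsOrderedPartition_s7 L) (hk₂ : k₂ < L.length)
    (hΔ : Δ ⊂ L.getD k₁ ∅) : IsOrderedPartition_s7 (slide L k₁ k₂ Δ) := by
  refine ⟨fun C hC => ?_, fun S => ?_⟩
  · exact Finset.nonempty_iff_ne_empty.2 (of_decide_eq_true (List.mem_filter.1 hC).2)
  · simp only [hL.length_slide hk₂ hΔ, hL.mem_getD_slide hk₂ hΔ]
    split_ifs
    · exact ⟨k₂, ⟨hk₂, rfl⟩, fun _ hi => hi.2⟩
    · exact hL.2 S

theorem slide_self (hL : IsOrderedPartition_s7 L) (hΔ : Δ ⊂ L.getD k ∅) : slide L k k Δ = L := by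
  obtain ⟨S, hS, -⟩ := Finset.exists_of_ssubset hΔ
  have hk : k < L.length := lt_length_of_mem_getD hS
  refine ext_mem_getD (hL.length_slide hk hΔ) fun i T => ?_
  rw [hL.mem_getD_slide hk hΔ]
  split_ifs with hT
  · exact ⟨fun hi => hi ▸ hΔ.1 hT, fun hi => hL.index_unique hi (hΔ.1 hT)⟩
  · rfl

theorem slide_slide (hL : IsOrderedPartition_s7 L) (hm : m < L.length) (hk₂ : k₂ < L.length)
    (hΔ : Δ ⊂ L.getD k₁ ∅) : slide (slide L k₁ m Δ) m k₂ Δ = slide L k₁ k₂ Δ := by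
  have hM := hL.slide hm hΔ
  have hΔm := hL.ssubset_getD_slide hm hΔ
  have hlen := hL.length_slide hm hΔ
  have hk₂' : k₂ < (slide L k₁ m Δ).length := hlen.symm ▸ hk₂
  refine ext_mem_getD ?_ fun i S => ?_
  · rw [hM.length_slide hk₂' hΔm, hlen, hL.length_slide hk₂ hΔ]
  · rw [hM.mem_getD_slide hk₂' hΔm, hL.mem_getD_slide hm hΔ, hL.mem_getD_slide hk₂ hΔ]
    split_ifs <;> rfl

end IsOrderedPartition_s7

variable [DecidableEq Y] {R : (Finset Y → Finset Y → Prop) → Y → Y → Prop}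

theorem SI.topSI (hR : SI R) : TopSI R :=
  fun r r' L k₂ => hR r r' L 0 k₂

theorem TopSI.si (hR : TopSI R) : SI R := by
  intro r r' L k₁ k₂ x y Δ hr hk₁ hk₂ hΔ hcount hr'
  have hL : IsOrderedPartition_s7 L := exists_isClassList_iff.1 ⟨r, hr⟩
  have h0 : 0 < L.length := k₁.zero_le.trans_lt hk₁
  have hlen : (slide L k₁ 0 Δ).length = L.length := hL.length_slide h0 hΔ
  obtain ⟨r'', hr''⟩ := exists_isClassList_iff.2 (hL.slide h0 hΔ)
  have agree_of_slide : ∀ {s k}, k < L.length → IsClassList s (slide L k₁ k Δ) →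
      AgreeOn (R r'') (R s) x y := fun {s k} hk hs =>
    hR r'' s (slide L k₁ 0 Δ) k x y Δ hr'' (hlen ▸ h0) (hlen ▸ hk)
      (hL.ssubset_getD_slide h0 hΔ) hcount ((hL.slide_slide h0 hk hΔ).symm ▸ hs)
  have hr_slide : IsClassList r (slide L k₁ k₁ Δ) := (hL.slide_self hΔ).symm ▸ hr
  exact (agree_of_slide hk₁ hr_slide).symm.trans (agree_of_slide hk₂ hr')

theorem si_iff_topsi_general (R : (Finset Y → Finset Y → Prop) → Y → Y → Prop) :
    SI R ↔ TopSI R :=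
  ⟨SI.topSI, TopSI.si⟩

end General

/-- An SRS satisfies slide independence iff it satisfies Top slide independence. -/
theorem si_iff_topsi [Nonempty X]
    (R : (Finset X → Finset X → Prop) → X → X → Prop) (hR : IsSRS R) :
    SI R ↔ TopSI R :=
  si_iff_topsi_general R

end SocialRanking
end
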